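/- Let q be a (sufficiently smooth) solution of the barotropic vorticity equation q_t + J(ψ,q) + βψ_x = f + νΔq − rq, q = Δψ, with boundary conditions q = 0, ψ = 0 on ∂D and initial condition q(·,·,0) = q₀. Then for every T > 0 and all 0 ≤ t ≤ T, ‖q(t)‖² ≤ ‖q₀‖² e^{2|α|T} + (1/r) e^{2|α|T} ∫₀ᵀ ‖f(s)‖² ds, where α = r/2 + πν/|D| − (|β|/2)(|D|/π + 1). -/

import Mathlib

open MeasureTheory Real Filter Topology

/-- Partial derivative in the `x` direction. -/
noncomputable def pdx (u : ℝ × ℝ → ℝ) (p : ℝ × ℝ) : ℝ := fderiv ℝ u p (1, 0)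

/-- Partial derivative in the `y` direction. -/
noncomputable def pdy (u : ℝ × ℝ → ℝ) (p : ℝ × ℝ) : ℝ := fderiv ℝ u p (0, 1)

/-- The Jacobian operator `J(u,v) = u_x v_y - u_y v_x`. -/
noncomputable def jac (u v : ℝ × ℝ → ℝ) (p : ℝ × ℝ) : ℝ :=
  pdx u p * pdy v p - pdy u p * pdx v p

/-- The Laplacian `Δu = u_xx + u_yy`. -/
noncomputable def lap (u : ℝ × ℝ → ℝ) (p : ℝ × ℝ) : ℝ :=
  pdx (pdx u) p + pdy (pdy u) p

/-- The squared `L²(D)` norm `‖u‖² = ∫_D u² dxdy`. -/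
noncomputable def l2sq (D : Set (ℝ × ℝ)) (u : ℝ × ℝ → ℝ) : ℝ :=
  ∫ p in D, (u p) ^ 2

/-- The `L²(D)` norm. -/
noncomputable def l2norm (D : Set (ℝ × ℝ)) (u : ℝ × ℝ → ℝ) : ℝ :=
  Real.sqrt (l2sq D u)

/-- The squared `L²(D)` norm of the gradient, `‖∇u‖² = ∫_D |∇u|² dxdy`. -/
noncomputable def gradsq (D : Set (ℝ × ℝ)) (u : ℝ × ℝ → ℝ) : ℝ :=
  ∫ p in D, ((pdx u p) ^ 2 + (pdy u p) ^ 2)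

/-- The `L²(D)` norm of the gradient. -/
noncomputable def gradNorm (D : Set (ℝ × ℝ)) (u : ℝ × ℝ → ℝ) : ℝ :=
  Real.sqrt (gradsq D u)

/-- The area `|D|` of the domain. -/
noncomputable def area (D : Set (ℝ × ℝ)) : ℝ := (volume D).toReal

/-- The constant `α = r/2 + πν/|D| - (|β|/2)(|D|/π + 1)`. -/
noncomputable def alphaConst (D : Set (ℝ × ℝ)) (β ν r : ℝ) : ℝ :=
  r / 2 + π * ν / area D - |β| / 2 * (area D / π + 1)

/-- A space-time field that is smooth jointly in time and space. -/
def SmoothField (u : ℝ → ℝ × ℝ → ℝ) : Prop :=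
  ContDiff ℝ (⊤ : ℕ∞) (Function.uncurry u)

/-- A space-time field that is mean-square integrable in space and time
(on the time interval `[0,∞)` and the spatial domain `D`). -/
def MeanSquareIntegrable (D : Set (ℝ × ℝ)) (f : ℝ → ℝ × ℝ → ℝ) : Prop :=
  (∀ t, 0 ≤ t → Integrable (fun p => (f t p) ^ 2) (volume.restrict D)) ∧
  (∀ T, 0 < T → IntervalIntegrable (fun t => l2sq D (f t)) volume 0 T)

/-- `SolvesBVE D β ν r q ψ f g` says that the vorticity `q`, with streamfunction `ψ`,
solves the barotropic vorticity equation
`q_t + J(ψ,q) + β ψ_x = f + ν Δq - r q + g` on the domain `D` for all times `t ≥ 0`,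
with the relation `q = Δψ` and zero boundary conditions `q = 0`, `ψ = 0` on `∂D`.
The extra field `g` is an additional forcing term (e.g. a subgrid-scale stress,
a stochastic parameterization, or `0`). -/
def SolvesBVE (D : Set (ℝ × ℝ)) (β ν r : ℝ) (q ψ f g : ℝ → ℝ × ℝ → ℝ) : Prop :=
  (∀ t, 0 ≤ t → ∀ p ∈ D, q t p = lap (ψ t) p) ∧
  (∀ t, 0 ≤ t → ∀ p ∈ frontier D, q t p = 0 ∧ ψ t p = 0) ∧
  (∀ t, 0 ≤ t → ∀ p ∈ D,
    deriv (fun s => q s p) t + jac (ψ t) (q t) p + β * pdx (ψ t) p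
      = f t p + ν * lap (q t) p - r * q t p + g t p)

/-- The endpoints of the bounded components of an open set `S`. -/
def gaps (S : Set ℝ) : Set (ℝ × ℝ) :=
  {p | p.1 < p.2 ∧ p.1 ∉ S ∧ p.2 ∉ S ∧ Set.Ioo p.1 p.2 ⊆ S}

theorem exists_mem_gaps {S : Set ℝ} (hS : IsOpen S) (hb : Bornology.IsBounded S) {x : ℝ}
    (hx : x ∈ S) : ∃ p ∈ gaps S, x ∈ Set.Ioo p.1 p.2 := by
  have hc : IsClosed Sᶜ := hS.isClosed_compl
  obtain ⟨R, hR⟩ := hb.subset_closedBall 0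
  have hout : ∀ z, R < |z| → z ∈ Sᶜ := fun z hz hzS => by
    have := hR hzS
    rw [Metric.mem_closedBall, Real.dist_eq, sub_zero] at this
    linarith
  have hxR : |x| ≤ R := by simpa [Real.dist_eq] using hR hx
  have hx' := abs_le.1 hxR
  have hR0 : 0 ≤ R := (abs_nonneg x).trans hxR
  have hlo : -(R + 1) ∈ Sᶜ := hout _ (by rw [abs_neg, abs_of_nonneg (by linarith)]; linarith)
  have hhi : R + 1 ∈ Sᶜ := hout _ (by rw [abs_of_nonneg (by linarith)]; linarith)
  have hA : IsClosed (Sᶜ ∩ Set.Iic x) := hc.inter isClosed_Iic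
  have hB : IsClosed (Sᶜ ∩ Set.Ici x) := hc.inter isClosed_Ici
  have bA : BddAbove (Sᶜ ∩ Set.Iic x) := ⟨x, fun z hz => hz.2⟩
  have bB : BddBelow (Sᶜ ∩ Set.Ici x) := ⟨x, fun z hz => hz.2⟩
  have ha := hA.csSup_mem ⟨-(R + 1), hlo, by simp only [Set.mem_Iic]; linarith⟩ bA
  have hb := hB.csInf_mem ⟨R + 1, hhi, by simp only [Set.mem_Ici]; linarith⟩ bB
  have hax := lt_of_le_of_ne (Set.mem_Iic.1 ha.2) (fun h => ha.1 (by rw [h]; exact hx))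
  have hxb := lt_of_le_of_ne (Set.mem_Ici.1 hb.2) (fun h => hb.1 (by rw [← h]; exact hx))
  refine ⟨(_, _), ⟨hax.trans hxb, ha.1, hb.1, fun z hz => ?_⟩, hax, hxb⟩
  by_contra hzS
  rcases le_total z x with h | h
  · exact absurd (le_csSup bA ⟨hzS, h⟩) (not_le.2 hz.1)
  · exact absurd (csInf_le bB ⟨hzS, h⟩) (not_le.2 hz.2)

theorem gaps_pairwiseDisjoint (S : Set ℝ) :
    (gaps S).PairwiseDisjoint (fun p => Set.Ioo p.1 p.2) := by
  intro p hp p' hp' hne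
  refine Set.disjoint_left.2 fun x hx hx' => hne ?_
  obtain ⟨-, h1, h2, h3⟩ := hp
  obtain ⟨-, h1', h2', h3'⟩ := hp'
  ext
  · rcases lt_trichotomy p.1 p'.1 with h | h | h
    · exact absurd (h3 ⟨h, hx'.1.trans hx.2⟩) h1'
    · exact h
    · exact absurd (h3' ⟨h, hx.1.trans hx'.2⟩) h1
  · rcases lt_trichotomy p.2 p'.2 with h | h | h
    · exact absurd (h3' ⟨hx'.1.trans hx.2, h⟩) h2
    · exact h
    · exact absurd (h3 ⟨hx.1.trans hx'.2, h⟩) h2'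

theorem mem_frontier_of_mem_gaps {S : Set ℝ} (hS : IsOpen S) {p : ℝ × ℝ} (hp : p ∈ gaps S) :
    p.1 ∈ frontier S ∧ p.2 ∈ frontier S := by
  obtain ⟨h, h1, h2, h3⟩ := hp
  have hcl : Set.Icc p.1 p.2 ⊆ closure S := by
    rw [← closure_Ioo h.ne]; exact closure_mono h3
  rw [hS.frontier_eq]
  exact ⟨⟨hcl (Set.left_mem_Icc.2 h.le), h1⟩, ⟨hcl (Set.right_mem_Icc.2 h.le), h2⟩⟩

theorem setIntegral_deriv_eq_zero {S : Set ℝ} (hS : IsOpen S) (hb : Bornology.IsBounded S)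
    {g g' : ℝ → ℝ} (hg : ∀ x, HasDerivAt g (g' x) x) (hg' : Continuous g')
    (h0 : ∀ x ∈ frontier S, g x = 0) : ∫ x in S, g' x = 0 := by
  have hcover : ⋃ p : gaps S, Set.Ioo p.1.1 p.1.2 = S := by
    ext x
    simp only [Set.mem_iUnion]
    constructor
    · rintro ⟨p, hxp⟩
      exact p.2.2.2.2 hxp
    · intro hx
      obtain ⟨p, hp, hxp⟩ := exists_mem_gaps hS hb hx
      exact ⟨⟨p, hp⟩, hxp⟩
  have hcount : (gaps S).Countable :=
    (gaps_pairwiseDisjoint S).countable_of_isOpen (fun _ _ => isOpen_Ioo)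
      (fun p hp => Set.nonempty_Ioo.2 hp.1)
  have hint : IntegrableOn g' (⋃ p : gaps S, Set.Ioo p.1.1 p.1.2) := by
    rw [hcover]
    exact (hg'.continuousOn.integrableOn_compact hb.isCompact_closure).mono_set subset_closure
  have := hcount.to_subtype
  rw [← hcover, integral_iUnion (fun _ => measurableSet_Ioo)
    ((gaps_pairwiseDisjoint S).subtype _ _) hint]
  refine (tsum_congr fun p => ?_).trans tsum_zero
  obtain ⟨hf1, hf2⟩ := mem_frontier_of_mem_gaps hS p.2
  rw [← integral_Ioc_eq_integral_Ioo, ← intervalIntegral.integral_of_le p.2.1.le,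
    intervalIntegral.integral_eq_sub_of_hasDerivAt (fun x _ => hg x)
      (hg'.intervalIntegrable _ _), h0 _ hf1, h0 _ hf2, sub_zero]

theorem abs_le_half_setIntegral_abs_deriv {S : Set ℝ} (hS : IsOpen S)
    (hb : Bornology.IsBounded S)
    {g g' : ℝ → ℝ} (hg : ∀ x, HasDerivAt g (g' x) x) (hg' : Continuous g')
    (h0 : ∀ x ∈ frontier S, g x = 0) {x : ℝ} (hx : x ∈ S) :
    |g x| ≤ 1 / 2 * ∫ x in S, |g' x| := by
  obtain ⟨p, hp, hxp⟩ := exists_mem_gaps hS hb hx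
  obtain ⟨hf1, hf2⟩ := mem_frontier_of_mem_gaps hS hp
  have hint : IntegrableOn (fun x => |g' x|) S :=
    (hg'.abs.continuousOn.integrableOn_compact hb.isCompact_closure).mono_set subset_closure
  have hle : ∫ x in p.1..p.2, |g' x| ≤ ∫ x in S, |g' x| := by
    rw [intervalIntegral.integral_of_le hp.1.le, integral_Ioc_eq_integral_Ioo]
    exact setIntegral_mono_set hint (ae_of_all _ fun _ => abs_nonneg _)
      (LE.le.eventuallyLE hp.2.2.2)
  have e1 : ∫ x in p.1..x, g' x = g x - g p.1 :=
    intervalIntegral.integral_eq_sub_of_hasDerivAt (fun x _ => hg x) (hg'.intervalIntegrable _ _)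
  have e2 : ∫ x in x..p.2, g' x = g p.2 - g x :=
    intervalIntegral.integral_eq_sub_of_hasDerivAt (fun x _ => hg x) (hg'.intervalIntegrable _ _)
  have l1 := intervalIntegral.abs_integral_le_integral_abs (f := g') (μ := volume) hxp.1.le
  have l2 := intervalIntegral.abs_integral_le_integral_abs (f := g') (μ := volume) hxp.2.le
  rw [e1, h0 _ hf1, sub_zero] at l1
  rw [e2, h0 _ hf2, zero_sub, abs_neg] at l2
  have := intervalIntegral.integral_add_adjacent_intervals (hg'.abs.intervalIntegrable p.1 x)
    (hg'.abs.intervalIntegrable (μ := volume) x p.2)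
  linarith

theorem hasDerivAt_fst_section {w : ℝ × ℝ → ℝ} (hw : Differentiable ℝ w) (x y : ℝ) :
    HasDerivAt (fun s => w (s, y)) (pdx w (x, y)) x :=
  (hw (x, y)).hasFDerivAt.comp_hasDerivAt x ((hasDerivAt_id x).prodMk (hasDerivAt_const x y))

theorem hasDerivAt_snd_section {w : ℝ × ℝ → ℝ} (hw : Differentiable ℝ w) (x y : ℝ) :
    HasDerivAt (fun s => w (x, s)) (pdy w (x, y)) y :=
  (hw (x, y)).hasFDerivAt.comp_hasDerivAt y ((hasDerivAt_const y x).prodMk (hasDerivAt_id y))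

theorem ContDiff.continuous_pdx {w : ℝ × ℝ → ℝ} (hw : ContDiff ℝ 1 w) : Continuous (pdx w) :=
  (hw.continuous_fderiv one_ne_zero).clm_apply continuous_const

theorem ContDiff.continuous_pdy {w : ℝ × ℝ → ℝ} (hw : ContDiff ℝ 1 w) : Continuous (pdy w) :=
  (hw.continuous_fderiv one_ne_zero).clm_apply continuous_const

theorem Continuous.integrableOn_of_isBounded {w : ℝ × ℝ → ℝ} (hw : Continuous w)
    {D : Set (ℝ × ℝ)} (hDb : Bornology.IsBounded D) : IntegrableOn w D :=
  (hw.continuousOn.integrableOn_compact hDb.isCompact_closure).mono_set subset_closure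

theorem isBounded_fst_section {D : Set (ℝ × ℝ)} (hDb : Bornology.IsBounded D) (y : ℝ) :
    Bornology.IsBounded ((fun x => (x, y)) ⁻¹' D) :=
  hDb.image_fst.subset fun x hx => ⟨(x, y), hx, rfl⟩

theorem isBounded_snd_section {D : Set (ℝ × ℝ)} (hDb : Bornology.IsBounded D) (x : ℝ) :
    Bornology.IsBounded ((fun y => (x, y)) ⁻¹' D) :=
  hDb.image_snd.subset fun y hy => ⟨(x, y), hy, rfl⟩

theorem integral_indicator_fst_section {D : Set (ℝ × ℝ)} (hD : IsOpen D) (w : ℝ × ℝ → ℝ)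
    (y : ℝ) : ∫ x, D.indicator w (x, y) = ∫ x in (fun x => (x, y)) ⁻¹' D, w (x, y) := by
  rw [← integral_indicator (hD.preimage (by fun_prop)).measurableSet]
  rfl

theorem integral_indicator_snd_section {D : Set (ℝ × ℝ)} (hD : IsOpen D) (w : ℝ × ℝ → ℝ)
    (x : ℝ) : ∫ y, D.indicator w (x, y) = ∫ y in (fun y => (x, y)) ⁻¹' D, w (x, y) := by
  rw [← integral_indicator (hD.preimage (by fun_prop)).measurableSet]
  rfl

theorem setIntegral_pdx_eq_zero {D : Set (ℝ × ℝ)} (hD : IsOpen D) (hDb : Bornology.IsBounded D)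
    {w : ℝ × ℝ → ℝ} (hw : ContDiff ℝ 1 w) (h0 : ∀ p ∈ frontier D, w p = 0) :
    ∫ p in D, pdx w p = 0 := by
  rw [← integral_indicator hD.measurableSet, Measure.volume_eq_prod, integral_prod_symm _
    ((hw.continuous_pdx.integrableOn_of_isBounded hDb).integrable_indicator hD.measurableSet)]
  refine (integral_congr_ae (ae_of_all _ fun y => ?_)).trans (integral_zero _ _)
  have hc : Continuous fun x : ℝ => (x, y) := by fun_prop
  refine (integral_indicator_fst_section hD _ y).trans
    (setIntegral_deriv_eq_zero (hD.preimage hc) (isBounded_fst_section hDb y)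
      (fun x => hasDerivAt_fst_section (hw.differentiable one_ne_zero) x y)
      (hw.continuous_pdx.comp hc) fun x hx => h0 _ (hc.frontier_preimage_subset D hx))

theorem setIntegral_pdy_eq_zero {D : Set (ℝ × ℝ)} (hD : IsOpen D) (hDb : Bornology.IsBounded D)
    {w : ℝ × ℝ → ℝ} (hw : ContDiff ℝ 1 w) (h0 : ∀ p ∈ frontier D, w p = 0) :
    ∫ p in D, pdy w p = 0 := by
  rw [← integral_indicator hD.measurableSet, Measure.volume_eq_prod, integral_prod _
    ((hw.continuous_pdy.integrableOn_of_isBounded hDb).integrable_indicator hD.measurableSet)]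
  refine (integral_congr_ae (ae_of_all _ fun x => ?_)).trans (integral_zero _ _)
  have hc : Continuous fun y : ℝ => (x, y) := by fun_prop
  refine (integral_indicator_snd_section hD _ x).trans
    (setIntegral_deriv_eq_zero (hD.preimage hc) (isBounded_snd_section hDb x)
      (fun y => hasDerivAt_snd_section (hw.differentiable one_ne_zero) x y)
      (hw.continuous_pdy.comp hc) fun y hy => h0 _ (hc.frontier_preimage_subset D hy))

/-- A form of the planar Gagliardo-Nirenberg-Sobolev inequality. -/
theorem l2sq_le_integral_abs_pdx_mul {D : Set (ℝ × ℝ)} (hD : IsOpen D)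
    (hDb : Bornology.IsBounded D)
    {u : ℝ × ℝ → ℝ} (hu : ContDiff ℝ 1 u) (h0 : ∀ p ∈ frontier D, u p = 0) :
    l2sq D u ≤ 1 / 4 * ((∫ p in D, |pdx u p|) * ∫ p in D, |pdy u p|) := by
  set A : ℝ × ℝ → ℝ := D.indicator fun p => |pdx u p| with hA
  set B : ℝ × ℝ → ℝ := D.indicator fun p => |pdy u p| with hB
  have iA : Integrable A (volume.prod volume) :=
    (hu.continuous_pdx.abs.integrableOn_of_isBounded hDb).integrable_indicator hD.measurableSet
  have iB : Integrable B (volume.prod volume) :=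
    (hu.continuous_pdy.abs.integrableOn_of_isBounded hDb).integrable_indicator hD.measurableSet
  have iU : Integrable (D.indicator fun p => u p ^ 2) (volume.prod volume) :=
    ((hu.continuous.pow 2).integrableOn_of_isBounded hDb).integrable_indicator hD.measurableSet
  have key : ∀ p, D.indicator (fun p => u p ^ 2) p ≤
      1 / 4 * ((∫ y, B (p.1, y)) * ∫ x, A (x, p.2)) := by
    rintro ⟨x, y⟩
    have a0 : 0 ≤ ∫ x, A (x, y) :=
      integral_nonneg fun x => Set.indicator_nonneg (fun _ _ => abs_nonneg _) _
    have b0 : 0 ≤ ∫ y, B (x, y) :=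
      integral_nonneg fun x => Set.indicator_nonneg (fun _ _ => abs_nonneg _) _
    by_cases hp : (x, y) ∈ D
    · rw [Set.indicator_of_mem hp]
      have hcx : Continuous fun x : ℝ => (x, y) := by fun_prop
      have hcy : Continuous fun y : ℝ => (x, y) := by fun_prop
      have h1 : |u (x, y)| ≤ 1 / 2 * ∫ x, A (x, y) := by
        rw [hA, integral_indicator_fst_section hD _ y]
        exact abs_le_half_setIntegral_abs_deriv (hD.preimage hcx) (isBounded_fst_section hDb y)
          (fun x => hasDerivAt_fst_section (hu.differentiable one_ne_zero) x y)
          (hu.continuous_pdx.comp hcx)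
          (fun x hx => h0 _ (hcx.frontier_preimage_subset D hx)) hp
      have h2 : |u (x, y)| ≤ 1 / 2 * ∫ y, B (x, y) := by
        rw [hB, integral_indicator_snd_section hD _ x]
        exact abs_le_half_setIntegral_abs_deriv (hD.preimage hcy) (isBounded_snd_section hDb x)
          (fun y => hasDerivAt_snd_section (hu.differentiable one_ne_zero) x y)
          (hu.continuous_pdy.comp hcy)
          (fun y hy => h0 _ (hcy.frontier_preimage_subset D hy)) hp
      have := mul_le_mul h1 h2 (abs_nonneg _) (by positivity)
      rw [abs_mul_abs_self] at this
      dsimp only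
      linarith
    · rw [Set.indicator_of_notMem hp]
      dsimp only
      positivity
  have iBA : Integrable (fun p : ℝ × ℝ => (∫ y, B (p.1, y)) * ∫ x, A (x, p.2))
      (volume.prod volume) := iB.integral_prod_left.mul_prod iA.integral_prod_right
  calc l2sq D u = ∫ p, D.indicator (fun p => u p ^ 2) p ∂(volume.prod volume) := by
        rw [integral_indicator hD.measurableSet]; rfl
    _ ≤ ∫ p : ℝ × ℝ, 1 / 4 * ((∫ y, B (p.1, y)) * ∫ x, A (x, p.2)) ∂(volume.prod volume) :=
        integral_mono iU (iBA.const_mul _) key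
    _ = 1 / 4 * ((∫ x, ∫ y, B (x, y)) * ∫ y, ∫ x, A (x, y)) := by
        rw [integral_const_mul,
          integral_prod_mul (fun x => ∫ y, B (x, y)) (fun y => ∫ x, A (x, y))]
    _ = 1 / 4 * ((∫ p in D, |pdx u p|) * ∫ p in D, |pdy u p|) := by
        rw [← integral_prod _ iB, ← integral_prod_symm _ iA, hA, hB,
          integral_indicator hD.measurableSet, integral_indicator hD.measurableSet,
          ← Measure.volume_eq_prod, mul_comm (∫ p in D, |pdy u p|)]

theorem sq_setIntegral_abs_le {D : Set (ℝ × ℝ)} (hDb : Bornology.IsBounded D)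
    {v : ℝ × ℝ → ℝ} (hv : Continuous v) :
    (∫ p in D, |v p|) ^ 2 ≤ area D * ∫ p in D, v p ^ 2 := by
  set m := area D
  set X := ∫ p in D, |v p|
  have hfin : volume D ≠ ⊤ := hDb.measure_lt_top.ne
  have hm0 : 0 ≤ m := ENNReal.toReal_nonneg
  have hX : IntegrableOn (fun p => |v p|) D := hv.abs.integrableOn_of_isBounded hDb
  have hV : IntegrableOn (fun p => v p ^ 2) D := (hv.pow 2).integrableOn_of_isBounded hDb
  have h : 0 ≤ ∫ p in D, (m * |v p| - X) ^ 2 := integral_nonneg fun p => sq_nonneg _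
  have e : ∫ p in D, (m * |v p| - X) ^ 2
      = m ^ 2 * (∫ p in D, v p ^ 2) - 2 * m * X * X + m * X ^ 2 := by
    have : ∀ p, (m * |v p| - X) ^ 2 = (m ^ 2 * v p ^ 2 - 2 * m * X * |v p|) + X ^ 2 := by
      intro p; rw [← sq_abs (v p)]; ring
    simp only [this]
    have iV : IntegrableOn (fun p => m ^ 2 * v p ^ 2) D := hV.const_mul _
    have iX : IntegrableOn (fun p => 2 * m * X * |v p|) D := hX.const_mul _
    have iVX : IntegrableOn (fun p => m ^ 2 * v p ^ 2 - 2 * m * X * |v p|) D := iV.sub iX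
    rw [integral_add iVX (integrableOn_const hfin), integral_sub iV iX,
      integral_const_mul, integral_const_mul,
      setIntegral_const]
    rfl
  rcases hm0.eq_or_lt with hm | hm
  · have hz : volume D = 0 := by
      rcases (ENNReal.toReal_eq_zero_iff _).1 hm.symm with h | h
      · exact h
      · exact absurd h hfin
    simp [X, ← hm, Measure.restrict_eq_zero.2 hz]
  · rw [e] at h
    have : 0 ≤ m * (m * (∫ p in D, v p ^ 2) - X ^ 2) := by linarith
    linarith [nonneg_of_mul_nonneg_right this hm]

/-- The Poincaré inequality on bounded open planar sets. -/
theorem l2sq_le_area_mul_gradsq {D : Set (ℝ × ℝ)} (hD : IsOpen D) (hDb : Bornology.IsBounded D)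
    {u : ℝ × ℝ → ℝ} (hu : ContDiff ℝ 1 u) (h0 : ∀ p ∈ frontier D, u p = 0) :
    l2sq D u ≤ area D / π * gradsq D u := by
  have h1 := l2sq_le_integral_abs_pdx_mul hD hDb hu h0
  have h2 := sq_setIntegral_abs_le hDb hu.continuous_pdx
  have h3 := sq_setIntegral_abs_le hDb hu.continuous_pdy
  have e : gradsq D u = (∫ p in D, pdx u p ^ 2) + ∫ p in D, pdy u p ^ 2 :=
    integral_add ((hu.continuous_pdx.pow 2).integrableOn_of_isBounded hDb)
      ((hu.continuous_pdy.pow 2).integrableOn_of_isBounded hDb)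
  have hg : 0 ≤ area D * gradsq D u :=
    mul_nonneg ENNReal.toReal_nonneg (integral_nonneg fun p => by positivity)
  have h8 : l2sq D u ≤ area D * gradsq D u / 8 := by
    rw [e]
    nlinarith [sq_nonneg ((∫ p in D, |pdx u p|) - ∫ p in D, |pdy u p|)]
  calc l2sq D u ≤ area D * gradsq D u / 8 := h8
    _ ≤ area D * gradsq D u / π :=
        div_le_div_of_nonneg_left hg pi_pos (by linarith [pi_lt_four])
    _ = area D / π * gradsq D u := by ring

section PlaneCalculus

variable {u v : ℝ × ℝ → ℝ}

theorem ContDiff.pdx (hu : ContDiff ℝ (⊤ : ℕ∞) u) : ContDiff ℝ (⊤ : ℕ∞) (pdx u) :=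
  (hu.fderiv_right (by simp)).clm_apply contDiff_const

theorem ContDiff.pdy (hu : ContDiff ℝ (⊤ : ℕ∞) u) : ContDiff ℝ (⊤ : ℕ∞) (pdy u) :=
  (hu.fderiv_right (by simp)).clm_apply contDiff_const

theorem ContDiff.lap (hu : ContDiff ℝ (⊤ : ℕ∞) u) : ContDiff ℝ (⊤ : ℕ∞) (lap u) :=
  hu.pdx.pdx.add hu.pdy.pdy

theorem ContDiff.jac (hu : ContDiff ℝ (⊤ : ℕ∞) u) (hv : ContDiff ℝ (⊤ : ℕ∞) v) :
    ContDiff ℝ (⊤ : ℕ∞) (jac u v) :=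
  (hu.pdx.mul hv.pdy).sub (hu.pdy.mul hv.pdx)

theorem ContDiff.one_of_top (hu : ContDiff ℝ (⊤ : ℕ∞) u) : ContDiff ℝ 1 u :=
  hu.of_le (by exact_mod_cast le_top)

theorem pdx_mul (hu : ContDiff ℝ (⊤ : ℕ∞) u) (hv : ContDiff ℝ (⊤ : ℕ∞) v) (p : ℝ × ℝ) :
    pdx (fun p => u p * v p) p = u p * pdx v p + v p * pdx u p := by
  unfold pdx
  rw [fderiv_fun_mul (hu.differentiable (by simp) p) (hv.differentiable (by simp) p)]
  simp

theorem pdy_mul (hu : ContDiff ℝ (⊤ : ℕ∞) u) (hv : ContDiff ℝ (⊤ : ℕ∞) v) (p : ℝ × ℝ) :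
    pdy (fun p => u p * v p) p = u p * pdy v p + v p * pdy u p := by
  unfold pdy
  rw [fderiv_fun_mul (hu.differentiable (by simp) p) (hv.differentiable (by simp) p)]
  simp

theorem pdy_pdx_eq_pdx_pdy (hu : ContDiff ℝ (⊤ : ℕ∞) u) (p : ℝ × ℝ) :
    pdy (pdx u) p = pdx (pdy u) p := by
  have h : ContDiff ℝ (⊤ : ℕ∞) (fderiv ℝ u) := hu.fderiv_right (by simp)
  have hd : DifferentiableAt ℝ (fderiv ℝ u) p := h.differentiable (by simp) p
  have e : ∀ a b : ℝ × ℝ, fderiv ℝ (fun p => fderiv ℝ u p a) p b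
      = fderiv ℝ (fderiv ℝ u) p b a := by
    intro a b
    rw [fderiv_clm_apply hd (differentiableAt_const a)]
    simp
  have hs : IsSymmSndFDerivAt ℝ u p :=
    hu.contDiffAt.isSymmSndFDerivAt (by
      rw [minSmoothness_of_isRCLikeNormedField]
      exact WithTop.coe_le_coe.2 le_top)
  exact (e _ _).trans ((hs _ _).trans (e _ _).symm)

variable {D : Set (ℝ × ℝ)}

theorem setIntegral_mul_lap (hD : IsOpen D) (hDb : Bornology.IsBounded D)
    (hu : ContDiff ℝ (⊤ : ℕ∞) u) (hv : ContDiff ℝ (⊤ : ℕ∞) v) (h0 : ∀ p ∈ frontier D, u p = 0) :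
    ∫ p in D, u p * lap v p = -∫ p in D, (pdx u p * pdx v p + pdy u p * pdy v p) := by
  have hx : ContDiff ℝ (⊤ : ℕ∞) fun p => u p * pdx v p := hu.mul hv.pdx
  have hy : ContDiff ℝ (⊤ : ℕ∞) fun p => u p * pdy v p := hu.mul hv.pdy
  have ex := setIntegral_pdx_eq_zero hD hDb hx.one_of_top fun p hp => by simp [h0 p hp]
  have ey := setIntegral_pdy_eq_zero hD hDb hy.one_of_top fun p hp => by simp [h0 p hp]
  have i1 := (hu.continuous.mul hv.lap.continuous).integrableOn_of_isBounded hDb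
  have i2 := ((hu.pdx.continuous.mul hv.pdx.continuous).add
    (hu.pdy.continuous.mul hv.pdy.continuous)).integrableOn_of_isBounded hDb
  have hsum := integral_add (hx.pdx.continuous.integrableOn_of_isBounded hDb)
    (hy.pdy.continuous.integrableOn_of_isBounded hDb)
  rw [ex, ey, add_zero] at hsum
  rw [eq_neg_iff_add_eq_zero]
  refine (integral_add i1 i2).symm.trans (Eq.trans ?_ hsum)
  congr 1 with p
  simp only [Pi.mul_apply, Pi.add_apply]
  rw [pdx_mul hu hv.pdx, pdy_mul hu hv.pdy, lap]
  ring

theorem setIntegral_mul_jac_eq_zero (hD : IsOpen D) (hDb : Bornology.IsBounded D)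
    (hu : ContDiff ℝ (⊤ : ℕ∞) u) (hv : ContDiff ℝ (⊤ : ℕ∞) v) (h0 : ∀ p ∈ frontier D, v p = 0) :
    ∫ p in D, 2 * v p * jac u v p = 0 := by
  have hvv : ContDiff ℝ (⊤ : ℕ∞) fun p => v p * v p := hv.mul hv
  have hx : ContDiff ℝ (⊤ : ℕ∞) fun p => pdx u p * (v p * v p) := hu.pdx.mul hvv
  have hy : ContDiff ℝ (⊤ : ℕ∞) fun p => pdy u p * (v p * v p) := hu.pdy.mul hvv
  have ey := setIntegral_pdy_eq_zero hD hDb hx.one_of_top fun p hp => by simp [h0 p hp]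
  have ex := setIntegral_pdx_eq_zero hD hDb hy.one_of_top fun p hp => by simp [h0 p hp]
  have hdiff := integral_sub (hx.pdy.continuous.integrableOn_of_isBounded hDb)
    (hy.pdx.continuous.integrableOn_of_isBounded hDb)
  rw [ex, ey, sub_zero] at hdiff
  refine Eq.trans ?_ hdiff
  congr 1 with p
  rw [pdy_mul hu.pdx hvv, pdx_mul hu.pdy hvv, pdx_mul hv hv, pdy_mul hv hv,
    pdy_pdx_eq_pdx_pdy hu, jac]
  ring

theorem setIntegral_mul_lap_self (hD : IsOpen D) (hDb : Bornology.IsBounded D)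
    (hu : ContDiff ℝ (⊤ : ℕ∞) u) (h0 : ∀ p ∈ frontier D, u p = 0) :
    ∫ p in D, u p * lap u p = -gradsq D u := by
  rw [setIntegral_mul_lap hD hDb hu hu h0]
  simp only [gradsq, sq]

/-- Elliptic estimate for the gradient of the solution of the Dirichlet problem. -/
theorem gradsq_le_area_mul_l2sq_lap (hD : IsOpen D) (hDb : Bornology.IsBounded D)
    (hu : ContDiff ℝ (⊤ : ℕ∞) u) (h0 : ∀ p ∈ frontier D, u p = 0) :
    gradsq D u ≤ area D / π * l2sq D (lap u) := by
  have hC0 : 0 ≤ area D / π := div_nonneg ENNReal.toReal_nonneg pi_pos.le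
  have hP := l2sq_le_area_mul_gradsq hD hDb hu.one_of_top h0
  have hG := setIntegral_mul_lap_self hD hDb hu h0
  set C := area D / π with hC
  rcases hC0.eq_or_lt with h | h
  · have ha : area D = 0 := by
      rcases div_eq_zero_iff.1 (hC.symm.trans h.symm) with h | h
      · exact h
      · exact absurd h pi_ne_zero
    have hz : volume D = 0 := by
      rcases (ENNReal.toReal_eq_zero_iff _).1 ha with h | h
      · exact h
      · exact absurd h hDb.measure_lt_top.ne
    simp [gradsq, l2sq, Measure.restrict_eq_zero.2 hz]
  · have i1 : IntegrableOn (fun p => C⁻¹ * u p ^ 2) D :=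
      (continuous_const.mul (hu.continuous.pow 2)).integrableOn_of_isBounded hDb
    have i2 : IntegrableOn (fun p => C * lap u p ^ 2) D :=
      (continuous_const.mul (hu.lap.continuous.pow 2)).integrableOn_of_isBounded hDb
    have i3 : IntegrableOn (fun p => -2 * (u p * lap u p)) D :=
      (continuous_const.mul (hu.continuous.mul hu.lap.continuous)).integrableOn_of_isBounded hDb
    have hle : ∫ p in D, -2 * (u p * lap u p) ≤ ∫ p in D, (C⁻¹ * u p ^ 2 + C * lap u p ^ 2) := by
      refine integral_mono i3 (i1.add i2) fun p => ?_
      have e : C⁻¹ * u p ^ 2 + C * lap u p ^ 2 - -2 * (u p * lap u p)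
          = C⁻¹ * (u p + C * lap u p) ^ 2 := by field_simp; ring
      have : 0 ≤ C⁻¹ * (u p + C * lap u p) ^ 2 := by positivity
      dsimp only
      linarith
    rw [integral_const_mul, hG, integral_add i1 i2, integral_const_mul, integral_const_mul] at hle
    change -2 * -gradsq D u ≤ C⁻¹ * l2sq D u + C * l2sq D (lap u) at hle
    have : C⁻¹ * l2sq D u ≤ gradsq D u := by
      rw [inv_mul_le_iff₀ h]; exact hP
    linarith

/-- The enstrophy inequality at a fixed time, with `w` in the role of `q_t`. -/
theorem setIntegral_two_mul_le_of_vorticity_eq (hD : IsOpen D) (hDb : Bornology.IsBounded D)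
    {β ν r : ℝ} (hν : 0 < ν) (hr : 0 < r) {q ψ w f : ℝ × ℝ → ℝ}
    (hq : ContDiff ℝ (⊤ : ℕ∞) q) (hψ : ContDiff ℝ (⊤ : ℕ∞) ψ) (hw : Continuous w)
    (hf : Continuous f) (hlap : ∀ p ∈ D, q p = lap ψ p)
    (hq0 : ∀ p ∈ frontier D, q p = 0) (hψ0 : ∀ p ∈ frontier D, ψ p = 0)
    (heq : ∀ p ∈ D, w p + jac ψ q p + β * pdx ψ p = f p + ν * lap q p - r * q p) :
    ∫ p in D, 2 * q p * w p ≤ -2 * alphaConst D β ν r * l2sq D q + 1 / r * l2sq D f := by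
  have hl2 : l2sq D (lap ψ) = l2sq D q :=
    setIntegral_congr_fun hD.measurableSet fun p hp => by simp only [hlap p hp]
  have hG := gradsq_le_area_mul_l2sq_lap hD hDb hψ hψ0
  rw [hl2] at hG
  have hP : π / area D * l2sq D q ≤ gradsq D q := by
    have h := l2sq_le_area_mul_gradsq hD hDb hq.one_of_top hq0
    have hg : 0 ≤ gradsq D q := integral_nonneg fun p => by positivity
    rcases (show 0 ≤ area D from ENNReal.toReal_nonneg).eq_or_lt with ha | ha
    · rw [← ha]; simpa using hg
    · rw [div_mul_eq_mul_div, div_le_iff₀ ha]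
      rw [div_mul_eq_mul_div, le_div_iff₀ pi_pos] at h
      linarith
  have hI : ∀ {h : ℝ × ℝ → ℝ}, Continuous h → IntegrableOn h D :=
    fun h => h.integrableOn_of_isBounded hDb
  have cq := hq.continuous
  have clq := hq.lap.continuous
  have cj := (hψ.jac hq).continuous
  have cx := hψ.pdx.continuous
  have cy := hψ.pdy.continuous
  have hmono : ∫ p in D, 2 * q p * w p ≤ ∫ p in D, (1 / r * f p ^ 2 + (|β| - r) * q p ^ 2
      + 2 * ν * (q p * lap q p) + |β| * (pdx ψ p ^ 2 + pdy ψ p ^ 2) - 2 * q p * jac ψ q p) := by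
    refine setIntegral_mono_on (hI (by fun_prop)) (hI (by fun_prop)) hD.measurableSet
      fun p hp => ?_
    have hw : w p = f p + ν * lap q p - r * q p - jac ψ q p - β * pdx ψ p := by
      linarith [heq p hp]
    have h1 : 2 * (q p * f p) ≤ 1 / r * f p ^ 2 + r * q p ^ 2 := by
      have e : 1 / r * f p ^ 2 + r * q p ^ 2 - 2 * (q p * f p) = 1 / r * (f p - r * q p) ^ 2 := by
        field_simp; ring
      have : 0 ≤ 1 / r * (f p - r * q p) ^ 2 := by positivity
      linarith
    have h2 : -(2 * β * (q p * pdx ψ p)) ≤ |β| * (pdx ψ p ^ 2 + q p ^ 2) := by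
      refine (neg_le_abs _).trans ?_
      rw [mul_comm (2 : ℝ) β, mul_assoc, abs_mul]
      refine mul_le_mul_of_nonneg_left (abs_le.2 ⟨?_, ?_⟩) (abs_nonneg _)
      · linarith [sq_nonneg (q p + pdx ψ p)]
      · linarith [sq_nonneg (q p - pdx ψ p)]
    have h3 : 0 ≤ |β| * pdy ψ p ^ 2 := by positivity
    rw [hw]
    linarith
  rw [integral_sub (hI (by fun_prop)) (hI (by fun_prop)),
    integral_add (hI (by fun_prop)) (hI (by fun_prop)),
    integral_add (hI (by fun_prop)) (hI (by fun_prop)),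
    integral_add (hI (by fun_prop)) (hI (by fun_prop)), integral_const_mul, integral_const_mul,
    integral_const_mul, integral_const_mul, setIntegral_mul_jac_eq_zero hD hDb hψ hq hq0,
    setIntegral_mul_lap_self hD hDb hq hq0] at hmono
  change _ ≤ 1 / r * l2sq D f + (|β| - r) * l2sq D q + 2 * ν * -gradsq D q
    + |β| * gradsq D ψ - 0 at hmono
  have h1 := mul_le_mul_of_nonneg_left hG (abs_nonneg β)
  have h2 := mul_le_mul_of_nonneg_left hP hν.le
  have e : -2 * alphaConst D β ν r * l2sq D q = (|β| - r) * l2sq D q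
      - 2 * (ν * (π / area D * l2sq D q)) + |β| * (area D / π * l2sq D q) := by
    unfold alphaConst; ring
  linarith

end PlaneCalculus

namespace SmoothField

variable {u v : ℝ → ℝ × ℝ → ℝ}

theorem contDiff_apply (hu : SmoothField u) (t : ℝ) : ContDiff ℝ (⊤ : ℕ∞) (u t) :=
  hu.comp (contDiff_prodMk_right t)

theorem fderiv_apply (hu : SmoothField u) (t : ℝ) (p a : ℝ × ℝ) :
    fderiv ℝ (u t) p a = fderiv ℝ (Function.uncurry u) (t, p) (0, a) := by
  have h : HasFDerivAt (u t) _ p :=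
    ((ContDiff.differentiable hu (by simp)) (t, p)).hasFDerivAt.comp p
      (hasFDerivAt_prodMk_right t p)
  rw [h.fderiv]
  rfl

theorem hasDerivAt_time (hu : SmoothField u) (t : ℝ) (p : ℝ × ℝ) :
    HasDerivAt (fun s => u s p) (fderiv ℝ (Function.uncurry u) (t, p) (1, 0)) t :=
  HasFDerivAt.comp_hasDerivAt (l := Function.uncurry u) t
    ((ContDiff.differentiable hu (by simp)) (t, p)).hasFDerivAt
    ((hasDerivAt_id t).prodMk (hasDerivAt_const t p))

theorem of_eq_fderiv (hu : SmoothField u) (a : ℝ × ℝ × ℝ)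
    (h : ∀ t p, v t p = fderiv ℝ (Function.uncurry u) (t, p) a) : SmoothField v := by
  have e : Function.uncurry v = fun z => fderiv ℝ (Function.uncurry u) z a :=
    funext fun z => h z.1 z.2
  rw [SmoothField, e]
  exact (ContDiff.fderiv_right hu (by simp)).clm_apply contDiff_const

theorem pdx (hu : SmoothField u) : SmoothField fun t => pdx (u t) :=
  hu.of_eq_fderiv _ fun t p => hu.fderiv_apply t p _

theorem pdy (hu : SmoothField u) : SmoothField fun t => pdy (u t) :=
  hu.of_eq_fderiv _ fun t p => hu.fderiv_apply t p _

theorem deriv_time (hu : SmoothField u) : SmoothField fun t p => deriv (fun s => u s p) t :=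
  hu.of_eq_fderiv _ fun t p => (hu.hasDerivAt_time t p).deriv

theorem add (hu : SmoothField u) (hv : SmoothField v) : SmoothField fun t p => u t p + v t p :=
  ContDiff.add hu hv

theorem sub (hu : SmoothField u) (hv : SmoothField v) : SmoothField fun t p => u t p - v t p :=
  ContDiff.sub hu hv

theorem mul (hu : SmoothField u) (hv : SmoothField v) : SmoothField fun t p => u t p * v t p :=
  ContDiff.mul hu hv

theorem const_mul (c : ℝ) (hu : SmoothField u) : SmoothField fun t p => c * u t p :=
  contDiff_const.mul hu

theorem pow (hu : SmoothField u) (n : ℕ) : SmoothField fun t p => u t p ^ n :=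
  ContDiff.pow hu n

theorem lap (hu : SmoothField u) : SmoothField fun t => lap (u t) :=
  hu.pdx.pdx.add hu.pdy.pdy

theorem jac (hu : SmoothField u) (hv : SmoothField v) : SmoothField fun t => jac (u t) (v t) :=
  (hu.pdx.mul hv.pdy).sub (hu.pdy.mul hv.pdx)

variable {D : Set (ℝ × ℝ)}

theorem hasDerivAt_setIntegral (hu : SmoothField u) (hD : IsOpen D)
    (hDb : Bornology.IsBounded D) (t : ℝ) :
    HasDerivAt (fun s => ∫ p in D, u s p) (∫ p in D, deriv (fun s => u s p) t) t := by
  obtain ⟨C, hC⟩ := ((isCompact_Icc (a := t - 1) (b := t + 1)).prod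
    hDb.isCompact_closure).exists_bound_of_continuousOn
      (ContDiff.continuous hu.deriv_time).continuousOn
  have hs : Set.Icc (t - 1) (t + 1) ∈ 𝓝 t := Icc_mem_nhds (by linarith) (by linarith)
  refine (hasDerivAt_integral_of_dominated_loc_of_deriv_le (bound := fun _ => C)
    (F' := fun t p => deriv (fun s => u s p) t) hs
    (Eventually.of_forall fun s => (hu.contDiff_apply s).continuous.aestronglyMeasurable)
    ((hu.contDiff_apply t).continuous.integrableOn_of_isBounded hDb)
    (hu.deriv_time.contDiff_apply t).continuous.aestronglyMeasurable ?_
    (integrableOn_const hDb.measure_lt_top.ne)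
    (ae_of_all _ fun p s _ => (hu.hasDerivAt_time s p).differentiableAt.hasDerivAt)).2
  filter_upwards [ae_restrict_mem hD.measurableSet] with p hp s hs
  exact hC (s, p) ⟨hs, subset_closure hp⟩

theorem hasDerivAt_l2sq (hu : SmoothField u) (hD : IsOpen D)
    (hDb : Bornology.IsBounded D) (t : ℝ) :
    HasDerivAt (fun s => l2sq D (u s)) (∫ p in D, 2 * u t p * deriv (fun s => u s p) t) t := by
  refine ((hu.pow 2).hasDerivAt_setIntegral hD hDb t).congr_deriv ?_
  refine integral_congr_ae (ae_of_all _ fun p => ?_)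
  have h := ((hu.hasDerivAt_time t p).differentiableAt.hasDerivAt.fun_pow 2).deriv
  dsimp only
  rw [h]
  simp

end SmoothField

/-- Gronwall's inequality for `N' ≤ k N + c F` with `k`, `c` and `F` nonnegative. -/
theorem le_exp_mul_of_hasDerivAt_le {N N' F : ℝ → ℝ} {k c T : ℝ} (hk : 0 ≤ k) (hc : 0 ≤ c)
    (hN : ∀ t, HasDerivAt N (N' t) t) (hN0 : 0 ≤ N 0) (hF : Continuous F) (hF0 : ∀ t, 0 ≤ F t)
    (hle : ∀ t, 0 ≤ t → N' t ≤ k * N t + c * F t) {t : ℝ} (ht : t ∈ Set.Icc 0 T) :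
    N t ≤ N 0 * exp (k * T) + c * exp (k * T) * ∫ s in (0 : ℝ)..T, F s := by
  have hE : ∀ t, HasDerivAt (fun t => exp (-k * t)) (exp (-k * t) * (-k)) t := fun t => by
    simpa using ((hasDerivAt_id t).const_mul (-k)).exp
  have hI : ∀ t, HasDerivAt (fun t => ∫ s in (0 : ℝ)..t, F s) (F t) t := fun t =>
    intervalIntegral.integral_hasDerivAt_right (hF.intervalIntegrable _ _)
      (hF.stronglyMeasurableAtFilter _ _) hF.continuousAt
  have hΦ : ∀ t, HasDerivAt (fun t => exp (-k * t) * N t - c * ∫ s in (0 : ℝ)..t, F s) _ t :=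
    fun t => ((hE t).mul (hN t)).sub ((hI t).const_mul c)
  have hanti : AntitoneOn (fun t => exp (-k * t) * N t - c * ∫ s in (0 : ℝ)..t, F s)
      (Set.Ici 0) := by
    refine antitoneOn_of_deriv_nonpos (convex_Ici 0)
      (fun t _ => (hΦ t).continuousAt.continuousWithinAt)
      (fun t _ => (hΦ t).differentiableAt.differentiableWithinAt) fun t ht => ?_
    rw [interior_Ici, Set.mem_Ioi] at ht
    rw [(hΦ t).deriv]
    have h1 : exp (-k * t) ≤ 1 := exp_le_one_iff.2 (by nlinarith)
    have h2 := mul_le_mul_of_nonneg_left (hle t ht.le) (exp_pos (-k * t)).le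
    have h3 := mul_le_mul_of_nonneg_right h1 (mul_nonneg hc (hF0 t))
    linarith
  have h := hanti Set.self_mem_Ici ht.1 ht.1
  simp only [mul_zero, exp_zero, one_mul, intervalIntegral.integral_same, sub_zero] at h
  have hmono : ∫ s in (0 : ℝ)..t, F s ≤ ∫ s in (0 : ℝ)..T, F s :=
    intervalIntegral.integral_mono_interval le_rfl ht.1 ht.2 (ae_of_all _ hF0)
      (hF.intervalIntegrable _ _)
  have hT : 0 ≤ N 0 + c * ∫ s in (0 : ℝ)..T, F s :=
    add_nonneg hN0 (mul_nonneg hc (intervalIntegral.integral_nonneg (ht.1.trans ht.2)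
      fun s _ => hF0 s))
  have hexp : exp (k * t) * exp (-k * t) = 1 := by rw [← exp_add]; simp
  calc N t = exp (k * t) * (exp (-k * t) * N t) := by rw [← mul_assoc, hexp, one_mul]
    _ ≤ exp (k * t) * (N 0 + c * ∫ s in (0 : ℝ)..T, F s) := by
        refine mul_le_mul_of_nonneg_left ?_ (exp_pos _).le
        linarith [mul_le_mul_of_nonneg_left hmono hc]
    _ ≤ exp (k * T) * (N 0 + c * ∫ s in (0 : ℝ)..T, F s) :=
        mul_le_mul_of_nonneg_right
          (exp_le_exp.2 (mul_le_mul_of_nonneg_left ht.2 hk)) hT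
    _ = N 0 * exp (k * T) + c * exp (k * T) * ∫ s in (0 : ℝ)..T, F s := by ring

/-- Lemma 1, second enstrophy estimate.
If `q` is a (sufficiently smooth) solution of the barotropic vorticity equation
`q_t + J(ψ,q) + βψ_x = f + νΔq - rq`, `q = Δψ`, with zero boundary conditions
on `∂D` and initial condition `q(·,·,0) = q₀`, then for every `T > 0` and all
`0 ≤ t ≤ T`,
`‖q(t)‖² ≤ ‖q₀‖² e^{2|α|T} + (1/r) e^{2|α|T} ∫₀ᵀ ‖f(s)‖² ds`,
where `α = r/2 + πν/|D| - (|β|/2)(|D|/π + 1)`. -/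
theorem enstrophy_uniform_estimate
    (D : Set (ℝ × ℝ)) (hD : IsOpen D) (hDb : Bornology.IsBounded D)
    (β ν r : ℝ) (hν : 0 < ν) (hr : 0 < r)
    (q ψ f : ℝ → ℝ × ℝ → ℝ) (q₀ : ℝ × ℝ → ℝ)
    (hq : SmoothField q) (hψ : SmoothField ψ)
    (hf : MeanSquareIntegrable D f)
    (hsol : SolvesBVE D β ν r q ψ f (fun _ _ => 0))
    (hinit : q 0 = q₀) :
    ∀ T, 0 < T → ∀ t ∈ Set.Icc (0:ℝ) T,
      l2sq D (q t) ≤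
        l2sq D q₀ * Real.exp (2 * |alphaConst D β ν r| * T)
          + (1 / r) * Real.exp (2 * |alphaConst D β ν r| * T)
              * ∫ s in (0:ℝ)..T, l2sq D (f s) := by
  have hF : SmoothField fun t p => deriv (fun s => q s p) t + jac (ψ t) (q t) p
      + β * pdx (ψ t) p - ν * lap (q t) p + r * q t p :=
    (((hq.deriv_time.add (hψ.jac hq)).add (.const_mul β hψ.pdx)).sub (.const_mul ν hq.lap)).add
      (.const_mul r hq)
  set F : ℝ → ℝ × ℝ → ℝ := fun t p => deriv (fun s => q s p) t + jac (ψ t) (q t) p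
      + β * pdx (ψ t) p - ν * lap (q t) p + r * q t p with hFdef
  obtain ⟨hlap, hbd, heq⟩ := hsol
  have hfF : ∀ t, 0 ≤ t → l2sq D (f t) = l2sq D (F t) := fun t ht =>
    setIntegral_congr_fun hD.measurableSet fun p hp => by
      have : f t p = F t p := by
        simp only [hFdef]
        linarith [heq t ht p hp]
      simp only [this]
  have hl2nonneg : ∀ u : ℝ × ℝ → ℝ, 0 ≤ l2sq D u := fun u =>
    integral_nonneg fun p => sq_nonneg _
  intro T hT t ht
  rw [intervalIntegral.integral_congr (g := fun s => l2sq D (F s)) fun s hs => hfF s (by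
    rw [Set.uIcc_of_le hT.le] at hs; exact hs.1), ← hinit]
  refine le_exp_mul_of_hasDerivAt_le (N := fun t => l2sq D (q t)) (by positivity) (by positivity)
    (hq.hasDerivAt_l2sq hD hDb) (hl2nonneg _)
    (continuous_iff_continuousAt.2 fun s => (hF.hasDerivAt_l2sq hD hDb s).continuousAt)
    (fun s => hl2nonneg _) (fun s hs => ?_) ht
  have h := setIntegral_two_mul_le_of_vorticity_eq hD hDb (β := β) hν hr (hq.contDiff_apply s)
    (hψ.contDiff_apply s) (hq.deriv_time.contDiff_apply s).continuous
    (hF.contDiff_apply s).continuous (hlap s hs) (fun p hp => (hbd s hs p hp).1)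
    (fun p hp => (hbd s hs p hp).2) (fun p _ => by simp only [hFdef]; ring)
  have h2 := mul_le_mul_of_nonneg_right (neg_le_abs (alphaConst D β ν r)) (hl2nonneg (q s))
  linarith
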